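/- Let V be a finite-dimensional normed vector space, U a Banach space, 1 ≤ p < 2, ω a control on {(s,t): 0≤s≤t<∞}, and x:[0,∞)→U a path of finite p-variation controlled by ω: ‖x_t − x_s‖ ≤ ‖x‖_p·ω_{s,t}^{1/p}. Let f:V→L(U,V) be bounded, of class C¹ with bounded derivative (f ∈ C¹_b), and define φ_{t,s}(a) := a + f(a)(x_t − x_s). Then for T > 0 small enough there exists a family ψ = (ψ_{t,s})_{0≤s≤t≤T} of maps from V to V such that: (1) ψ_{t,t}(a) = a and ψ_{t,s}(ψ_{s,r}(a)) = ψ_{t,r}(a) for all 0 ≤ r ≤ s ≤ t ≤ T and a ∈ V (flow property); (2) each ψ_{t,s} is Borel measurable; (3) there is a constant C with ‖ψ_{t,s}(a) − φ_{t,s}(a)‖ ≤ C·(1+‖f(a)‖)·ω_{s,t}^{2/p} for all 0 ≤ s ≤ t ≤ T and a ∈ V. In particular, each path t ↦ ψ_{t,0}(a) is a solution in the sense of Davie of the Young differential equation y_t = a + ∫₀ᵗ f(y_s) dx_s, even though such solutions need not be unique for f merely C¹_b. -/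

import Mathlib

open Set

noncomputable section

/-- A control: a super-additive family `ω` vanishing on the diagonal and small
near the diagonal. -/
structure IsControl (T : ℝ) (ω : ℝ → ℝ → ℝ) : Prop where
  nonneg : ∀ ⦃s t : ℝ⦄, 0 ≤ s → s ≤ t → t ≤ T → 0 ≤ ω s t
  superadd : ∀ ⦃r s t : ℝ⦄, 0 ≤ r → r ≤ s → s ≤ t → t ≤ T → ω r s + ω s t ≤ ω r t
  diag : ∀ ⦃s : ℝ⦄, 0 ≤ s → s ≤ T → ω s s = 0
  small : ∀ ε > (0:ℝ), ∃ h > (0:ℝ), ∀ ⦃s t : ℝ⦄, 0 ≤ s → s ≤ t → t ≤ T → t - s ≤ h → ω s t < ε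

/-- A remainder: a continuous increasing function `ϖ` with `2ϖ(x/2) ≤ κϖ(x)`. -/
structure IsRemainder (κ : ℝ) (ϖ : ℝ → ℝ) : Prop where
  contOn : ContinuousOn ϖ (Set.Ici 0)
  strictMonoOn : StrictMonoOn ϖ (Set.Ici 0)
  nonneg : ∀ x, 0 ≤ x → 0 ≤ ϖ x
  doubling : ∀ x, 0 < x → 2 * ϖ (x / 2) ≤ κ * ϖ x


/-- Iterated argmax sets. -/
def selG {V : Type*} [NormedAddCommGroup V] [NormedSpace ℝ V]
    (G : ℝ → V → Set (ℝ → V)) (q : ℕ → ℝ) (l : ℕ → V →L[ℝ] ℝ) : ℕ → ℝ → V → Set (ℝ → V)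
  | 0 => G
  | k + 1 => fun s a => {y | y ∈ selG G q l k s a ∧
      ∀ z ∈ selG G q l k s a, l k (z (q k)) ≤ l k (y (q k))}

open Classical in
/-- Concatenation of two paths at time `t`. -/
def splice {V : Type*} (T t : ℝ) (y z : ℝ → V) : ℝ → V :=
  fun r => if r ∈ Ioc t T then z r else y r

theorem closed_proj {V : Type*} [NormedAddCommGroup V] [NormedSpace ℝ V]
    [FiniteDimensional ℝ V] (G : V → Set (ℝ → V)) (R : ℝ)
    (hcl : IsClosed {z : V × (ℝ → V) | z.2 ∈ G z.1})
    (hb : ∀ a, ∀ y ∈ G a, ∀ r, ‖y r - a‖ ≤ R)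
    (q : ℕ → ℝ) (l : ℕ → V →L[ℝ] ℝ) (k : ℕ) :
    IsClosed {z : V × (ℕ → ℝ) | ∃ y ∈ G z.1, ∀ i ≤ k, z.2 i ≤ l i (y (q i))} := by
  have : ProperSpace V := FiniteDimensional.proper ℝ V
  let K : Set (ℝ → V) := Set.pi univ (fun _ => Metric.closedBall 0 R)
  have hK : IsCompact K := isCompact_univ_pi (fun _ => isCompact_closedBall 0 R)
  have : CompactSpace K := isCompact_iff_compactSpace.mp hK
  let F : Set ((V × (ℕ → ℝ)) × K) := {z | (fun r => z.1.1 + z.2.1 r) ∈ G z.1.1 ∧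
    ∀ i ≤ k, z.1.2 i ≤ l i (z.1.1 + z.2.1 (q i))}
  have hw : ∀ r, Continuous (fun z : (V × (ℕ → ℝ)) × K => z.2.1 r) := fun r =>
    (continuous_apply r).comp (continuous_subtype_val.comp continuous_snd)
  have ha : Continuous (fun z : (V × (ℕ → ℝ)) × K => z.1.1) := by fun_prop
  have hF : IsClosed F := by
    apply IsClosed.inter
    · have : Continuous (fun z : (V × (ℕ → ℝ)) × K =>
          ((z.1.1, fun r => z.1.1 + z.2.1 r) : V × (ℝ → V))) :=
        ha.prodMk (continuous_pi fun r => ha.add (hw r))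
      exact hcl.preimage this
    · have : {z : (V × (ℕ → ℝ)) × K | ∀ i ≤ k, z.1.2 i ≤ l i (z.1.1 + z.2.1 (q i))} =
        ⋂ i, ⋂ (_ : i ≤ k), {z | z.1.2 i ≤ l i (z.1.1 + z.2.1 (q i))} := by
        ext z; simp
      change IsClosed {z : (V × (ℕ → ℝ)) × K | ∀ i ≤ k, z.1.2 i ≤ l i (z.1.1 + z.2.1 (q i))}
      rw [this]
      refine isClosed_iInter fun i => isClosed_iInter fun _ => isClosed_le ?_ ?_
      · fun_prop
      · exact (l i).continuous.comp (ha.add (hw (q i)))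
  have := isClosedMap_fst_of_compactSpace (X := V × (ℕ → ℝ)) (Y := K) F hF
  convert this using 1
  ext ⟨a, c⟩
  constructor
  · rintro ⟨y, hy, hi⟩
    refine ⟨((a, c), ⟨fun r => y r - a, ?_⟩), ⟨?_, ?_⟩, rfl⟩
    · intro r _
      simpa using hb a y hy r
    · simpa using hy
    · simpa using hi
  · rintro ⟨⟨⟨a', c'⟩, w⟩, ⟨h1, h2⟩, h3⟩
    cases h3
    exact ⟨_, h1, h2⟩

theorem selection {V : Type*} [NormedAddCommGroup V] [NormedSpace ℝ V]
    [FiniteDimensional ℝ V] [MeasurableSpace V] [BorelSpace V]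
    (T : ℝ) (G : ℝ → V → Set (ℝ → V)) (R : ℝ)
    (hne : ∀ s a, 0 ≤ s → s ≤ T → (G s a).Nonempty)
    (hcl : ∀ s, 0 ≤ s → s ≤ T → IsClosed {z : V × (ℝ → V) | z.2 ∈ G s z.1})
    (hb : ∀ s, 0 ≤ s → s ≤ T → ∀ a, ∀ y ∈ G s a, ∀ r, ‖y r - a‖ ≤ R)
    (hout : ∀ s, 0 ≤ s → s ≤ T → ∀ a, ∀ y ∈ G s a, ∀ r ∉ Ioc s T, y r = a)
    (hres : ∀ s t, 0 ≤ s → s ≤ t → t ≤ T → ∀ a, ∀ y ∈ G s a,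
      splice T t (fun _ => y t) y ∈ G t (y t))
    (hspl : ∀ s t, 0 ≤ s → s ≤ t → t ≤ T → ∀ a, ∀ y ∈ G s a, ∀ z ∈ G t (y t),
      splice T t y z ∈ G s a)
    (hcont : ∀ s, 0 ≤ s → s ≤ T → ∀ a, ∀ y ∈ G s a, ContinuousOn y (Icc s T)) :
    ∃ Y : ℝ → V → ℝ → V,
      (∀ s, 0 ≤ s → s ≤ T → ∀ a, Y s a ∈ G s a) ∧
      (∀ r s t, 0 ≤ r → r ≤ s → s ≤ t → t ≤ T → ∀ a, Y s (Y r a s) t = Y r a t) ∧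
      (∀ s t, 0 ≤ s → s ≤ t → t ≤ T → Measurable (fun a => Y s a t)) := by
  have : ProperSpace V := FiniteDimensional.proper ℝ V
  obtain ⟨qq, hqq⟩ := exists_surjective_nat ℚ
  let e := (Module.finBasis ℝ V).equivFunL
  let d := Module.finrank ℝ V
  let ll : ℕ → V →L[ℝ] ℝ := fun j => if h : j < d then
    (ContinuousLinearMap.proj (R := ℝ) (φ := fun _ : Fin d => ℝ) ⟨j, h⟩).comp
      (e : V →L[ℝ] (Fin d → ℝ)) else 0
  have hll : ∀ (j : Fin d) v, ll j v = e v j := by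
    intro j v
    simp [ll]
  let q : ℕ → ℝ := fun k => (qq k.unpair.1 : ℝ)
  let l : ℕ → V →L[ℝ] ℝ := fun k => ll k.unpair.2
  have hql : ∀ (x : ℚ) (j : Fin d), ∃ k, q k = x ∧ l k = ll j := by
    intro x j
    obtain ⟨n, hn⟩ := hqq x
    exact ⟨Nat.pair n j, by simp [q, hn], by simp [l]⟩
  clear_value q l ll
  let S := selG G q l
  have S0 : S 0 = G := rfl
  have Ss : ∀ k s a y, y ∈ S (k+1) s a ↔ (y ∈ S k s a ∧
      ∀ z ∈ S k s a, l k (z (q k)) ≤ l k (y (q k))) := fun k s a y => Iff.rfl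
  have Ssub : ∀ k s a, S (k+1) s a ⊆ S k s a := fun k s a y hy => hy.1
  have Ssub0 : ∀ k s a, S k s a ⊆ G s a := by
    intro k
    induction k with
    | zero => intro s a; exact subset_rfl
    | succ k ih => intro s a; exact (Ssub k s a).trans (ih s a)
  -- splicing
  have hRS : ∀ k, (∀ s t, 0 ≤ s → s ≤ t → t ≤ T → ∀ a, ∀ y ∈ S k s a,
      splice T t (fun _ => y t) y ∈ S k t (y t)) ∧ 
      (∀ s t, 0 ≤ s → s ≤ t → t ≤ T → ∀ a, ∀ y ∈ S k s a, ∀ z ∈ S k t (y t),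
      splice T t y z ∈ S k s a) := by
    intro k
    induction k with
    | zero => exact ⟨hres, hspl⟩
    | succ k ih =>
      obtain ⟨ihR, ihS⟩ := ih
      constructor
      · intro s t hs hst htT a y hy
        refine ⟨ihR s t hs hst htT a y hy.1, fun z hz => ?_⟩
        have h1 := hy.2 _ (ihS s t hs hst htT a y hy.1 z hz)
        by_cases hq : q k ∈ Ioc t T
        · simpa [splice, hq] using h1
        · have := hout t (hs.trans hst) htT _ z (Ssub0 _ _ _ hz) _ hq
          simp only [splice, if_neg hq, this, le_refl]
      · intro s t hs hst htT a y hy z hz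
        refine ⟨ihS s t hs hst htT a y hy.1 z hz.1, fun v hv => ?_⟩
        have h1 := hy.2 v hv
        by_cases hq : q k ∈ Ioc t T
        · have h2 := hz.2 _ (ihR s t hs hst htT a y hy.1)
          simp only [splice, if_pos hq] at h2 ⊢
          exact h1.trans h2
        · simpa only [splice, if_neg hq] using h1
  -- compactness
  have hGclosed : ∀ s, 0 ≤ s → s ≤ T → ∀ a, IsClosed (G s a) := by
    intro s hs hsT a
    have : Continuous (fun y : ℝ → V => ((a, y) : V × (ℝ → V))) := by fun_prop
    exact (hcl s hs hsT).preimage this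
  have hGcomp : ∀ s, 0 ≤ s → s ≤ T → ∀ a, IsCompact (G s a) := by
    intro s hs hsT a
    have hK : IsCompact (Set.pi univ (fun _ : ℝ => Metric.closedBall a R)) :=
      isCompact_univ_pi (fun _ => isCompact_closedBall a R)
    refine hK.of_isClosed_subset (hGclosed s hs hsT a) ?_
    intro y hy r _
    simpa [dist_eq_norm] using hb s hs hsT a y hy r
  have hcc : ∀ k s, 0 ≤ s → s ≤ T → ∀ a, IsClosed (S k s a) ∧ (S k s a).Nonempty := by
    intro k
    induction k with
    | zero => intro s hs hsT a; exact ⟨hGclosed s hs hsT a, hne s a hs hsT⟩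
    | succ k ih =>
      intro s hs hsT a
      obtain ⟨h1, h2⟩ := ih s hs hsT a
      have hev : Continuous (fun y : ℝ → V => l k (y (q k))) := by fun_prop
      have hcomp := (hGcomp s hs hsT a).of_isClosed_subset h1 (Ssub0 k s a)
      obtain ⟨y, hy, hmax⟩ := hcomp.exists_isMaxOn h2 hev.continuousOn
      refine ⟨?_, y, hy, fun z hz => hmax hz⟩
      have : S (k+1) s a = S k s a ∩ ⋂ z ∈ S k s a, {y | l k (z (q k)) ≤ l k (y (q k))} := by
        ext y; simp [Ss]
      rw [this]
      exact h1.inter (isClosed_biInter fun z _ => isClosed_le continuous_const hev)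
  have hex : ∀ s a, ∃ y, 0 ≤ s → s ≤ T → ∀ k, y ∈ S k s a := by
    intro s a
    by_cases h : 0 ≤ s ∧ s ≤ T
    · obtain ⟨hs, hsT⟩ := h
      obtain ⟨y, hy⟩ := IsCompact.nonempty_iInter_of_sequence_nonempty_isCompact_isClosed
        (fun k => S k s a) (fun k => Ssub k s a) (fun k => (hcc k s hs hsT a).2)
        (hGcomp s hs hsT a) (fun k => (hcc k s hs hsT a).1)
      exact ⟨y, fun _ _ => mem_iInter.mp hy⟩
    · exact ⟨fun _ => a, fun h1 h2 => absurd ⟨h1, h2⟩ h⟩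
  choose Y hY using hex
  -- uniqueness
  have huniq : ∀ s, 0 ≤ s → s ≤ T → ∀ a y z, (∀ k, y ∈ S k s a) → (∀ k, z ∈ S k s a) → y = z := by
    intro s hs hsT a y z hy hz
    have hval : ∀ x : ℚ, y x = z x := by
      intro x
      apply e.injective
      ext j
      obtain ⟨k, hk1, hk2⟩ := hql x j
      have h1 := (hy (k+1)).2 z (hz k)
      have h2 := (hz (k+1)).2 y (hy k)
      rw [hk1, hk2, hll] at h1 h2
      exact le_antisymm (by simpa [hll] using h2) (by simpa [hll] using h1)
    funext r
    by_cases hr : r ∈ Ioc s T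
    · obtain ⟨u, -, hu, hut⟩ := Real.exists_seq_rat_strictMono_tendsto r
      have hev : ∀ᶠ n in Filter.atTop, (u n : ℝ) ∈ Icc s T := by
        filter_upwards [hut.eventually (lt_mem_nhds hr.1)] with n hn
        exact ⟨hn.le, (hu n).le.trans hr.2⟩
      have htw : Filter.Tendsto (fun n => (u n : ℝ)) Filter.atTop (nhdsWithin r (Icc s T)) :=
        tendsto_nhdsWithin_iff.mpr ⟨hut, hev⟩
      have hr' : r ∈ Icc s T := ⟨hr.1.le, hr.2⟩
      have c1 := (hcont s hs hsT a y (hy 0) r hr').tendsto.comp htw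
      have c2 := (hcont s hs hsT a z (hz 0) r hr').tendsto.comp htw
      refine tendsto_nhds_unique c1 (c2.congr fun n => ?_)
      exact (hval (u n)).symm
    · rw [hout s hs hsT a y (hy 0) r hr, hout s hs hsT a z (hz 0) r hr]
  refine ⟨Y, fun s hs hsT a => hY s a hs hsT 0, ?_, ?_⟩
  · intro r s t hr hrs hst htT a
    have hsT := hst.trans htT
    have hy := hY r a hr (hrs.trans hsT)
    have h1 : Y s (Y r a s) = splice T s (fun _ => Y r a s) (Y r a) := by
      apply huniq s (hr.trans hrs) hsT (Y r a s) _ _ (hY s _ (hr.trans hrs) hsT)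
      intro k
      exact (hRS k).1 r s hr hrs hsT a _ (hy k)
    rw [h1]
    by_cases h : t ∈ Ioc s T
    · simp [splice, h]
    · have : t = s := by
        by_contra hne
        exact h ⟨lt_of_le_of_ne hst (Ne.symm hne), htT⟩
      simp [splice, this]
  · intro s t hs hst htT
    have hsT := hst.trans htT
    have hmem : ∀ a k y, y ∈ S k s a ↔ y ∈ G s a ∧ ∀ i < k,
        l i (Y s a (q i)) ≤ l i (y (q i)) := by
      intro a k
      induction k with
      | zero => intro y; simp [S0]
      | succ k ih =>
        intro y
        rw [Ss, ih]
        constructor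
        · rintro ⟨⟨h1, h2⟩, h3⟩
          refine ⟨h1, fun i hi => ?_⟩
          rcases Nat.lt_succ_iff_lt_or_eq.mp hi with h | h
          · exact h2 i h
          · subst h; exact h3 _ (hY s a hs hsT i)
        · rintro ⟨h1, h2⟩
          refine ⟨⟨h1, fun i hi => h2 i (by omega)⟩, fun z hz => ?_⟩
          exact ((hY s a hs hsT (k+1)).2 z hz).trans (h2 k (by omega))
    have hm : ∀ k, Measurable (fun a => l k (Y s a (q k))) := by
      intro k
      induction k using Nat.strong_induction_on with
      | _ k ih =>
        apply measurable_of_Ici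
        intro c
        have hE := closed_proj (G s) R (hcl s hs hsT) (hb s hs hsT) q l k
        have hmeas : Measurable (fun a : V => ((a, fun i => if i < k then
            l i (Y s a (q i)) else c) : V × (ℕ → ℝ))) := by
          refine measurable_id.prodMk (measurable_pi_lambda _ fun i => ?_)
          by_cases hi : i < k
          · simpa [hi] using ih i hi
          · simp [hi]
        convert hmeas hE.measurableSet using 1
        ext a
        simp only [mem_preimage, mem_Ici, mem_ofPred_eq]
        constructor
        · intro hc
          refine ⟨Y s a, hY s a hs hsT 0, fun i hi => ?_⟩
          by_cases h : i < k
          · simp [h]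
          · have : i = k := by omega
            subst this; simpa using hc
        · rintro ⟨y, hy, hyi⟩
          have hyk : y ∈ S k s a := (hmem a k y).mpr ⟨hy, fun i hi => by
            simpa [hi] using hyi i hi.le⟩
          have h1 := (hY s a hs hsT (k+1)).2 y hyk
          have h2 := hyi k le_rfl
          simp only [lt_irrefl, if_false] at h2
          exact h2.trans h1
    have hmq : ∀ x : ℚ, Measurable (fun a => Y s a x) := by
      intro x
      have : Measurable (fun a => e (Y s a x)) := by
        refine measurable_pi_lambda _ fun j => ?_
        obtain ⟨k, hk1, hk2⟩ := hql x j
        have := hm k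
        rw [hk1, hk2] at this
        simpa [hll] using this
      have h2 := e.symm.continuous.measurable.comp this
      simpa [Function.comp_def] using h2
    rcases hst.eq_or_lt with h | h
    · subst h
      have : (fun a => Y s a s) = id := by
        funext a
        exact hout s hs hsT a _ (hY s a hs hsT 0) s (by simp)
      rw [this]; exact measurable_id
    · obtain ⟨u, -, hu, hut⟩ := Real.exists_seq_rat_strictMono_tendsto t
      refine measurable_of_tendsto_metrizable (fun n => hmq (u n)) ?_
      rw [tendsto_pi_nhds]
      intro a
      have hev : ∀ᶠ n in Filter.atTop, (u n : ℝ) ∈ Icc s T := by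
        filter_upwards [hut.eventually (lt_mem_nhds h)] with n hn
        exact ⟨hn.le, (hu n).le.trans htT⟩
      have htw : Filter.Tendsto (fun n => (u n : ℝ)) Filter.atTop (nhdsWithin t (Icc s T)) :=
        tendsto_nhdsWithin_iff.mpr ⟨hut, hev⟩
      exact (hcont s hs hsT a _ (hY s a hs hsT 0) t ⟨hst, htT⟩).tendsto.comp htw

/-- The contraction constant of the sewing argument. -/
def kap (θ δ : ℝ) : ℝ := (1 + (1 + δ) ^ 2) * (1 / 2 : ℝ) ^ θ

/-- An almost flow (bundled hypotheses). -/
structure AlmostFlow {V : Type*} [NormedAddCommGroup V] (T : ℝ) (ω : ℝ → ℝ → ℝ)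
    (θ δ C L B q : ℝ) (φ : ℝ → ℝ → V → V) : Prop where
  hT : 0 < T
  ctl : IsControl T ω
  hθ : 0 < θ
  hδ0 : 0 ≤ δ
  hδ1 : δ ≤ 1
  hC : 0 ≤ C
  hL0 : 0 ≤ L
  hB : 0 ≤ B
  hq : 0 < q
  hκ : kap θ δ < 1
  hL : kap θ δ * L + 3 * C = L
  diag : ∀ t a, φ t t a = a
  lip : ∀ s t, 0 ≤ s → s ≤ t → t ≤ T → ∀ a b, ‖φ t s a - φ t s b‖ ≤ (1 + δ) * ‖a - b‖
  comp : ∀ s u t, 0 ≤ s → s ≤ u → u ≤ t → t ≤ T → ∀ a,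
    ‖φ t u (φ u s a) - φ t s a‖ ≤ C * ω s t ^ θ
  move : ∀ s t, 0 ≤ s → s ≤ t → t ≤ T → ∀ a, ‖φ t s a - a‖ ≤ B * ω s t ^ q

section AF

theorem IsControl.mono' {T : ℝ} {ω : ℝ → ℝ → ℝ} (h : IsControl T ω) {s r u t : ℝ}
    (hs : 0 ≤ s) (hsr : s ≤ r) (hru : r ≤ u) (hut : u ≤ t) (htT : t ≤ T) :
    ω r u ≤ ω s t := by
  have h1 := h.superadd hs hsr (hru.trans hut) htT
  have h2 := h.superadd (hs.trans hsr) hru hut htT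
  have h3 := h.nonneg hs hsr (hru.trans (hut.trans htT))
  have h4 := h.nonneg (hs.trans (hsr.trans hru)) hut htT
  linarith

variable {V : Type*} [NormedAddCommGroup V] {T : ℝ} {ω : ℝ → ℝ → ℝ}
    {θ δ C L B q : ℝ} {φ : ℝ → ℝ → V → V}

theorem AlmostFlow.three (H : AlmostFlow T ω θ δ C L B q φ) {r u v t K η : ℝ} {y : ℝ → V}
    (hK : 0 ≤ K)
    (hr : 0 ≤ r) (hru : r ≤ u) (huv : u ≤ v) (hvt : v ≤ t) (htT : t ≤ T)
    (h1 : ω r u ≤ ω r t / 2) (h2 : ω v t ≤ ω r t / 2)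
    (k1 : ‖y u - φ u r (y r)‖ ≤ K * ω r u ^ θ) (k2 : ‖y t - φ t v (y v)‖ ≤ K * ω v t ^ θ)
    (k3 : ‖y v - φ v u (y u)‖ ≤ η) :
    ‖y t - φ t r (y r)‖ ≤ (kap θ δ * K + 3 * C) * ω r t ^ θ + 2 * η := by
  have hu0 := hr.trans hru
  have hv0 := hu0.trans huv
  have hw0 : 0 ≤ ω r t := H.ctl.nonneg hr (hru.trans (huv.trans hvt)) htT
  have half : (ω r t / 2) ^ θ = (1/2 : ℝ) ^ θ * ω r t ^ θ := by
    rw [← Real.mul_rpow (by norm_num) hw0]; congr 1; ring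
  have e1 : ω r u ^ θ ≤ (1/2 : ℝ) ^ θ * ω r t ^ θ := by
    rw [← half]
    exact Real.rpow_le_rpow (H.ctl.nonneg hr hru (huv.trans (hvt.trans htT))) h1 H.hθ.le
  have e2 : ω v t ^ θ ≤ (1/2 : ℝ) ^ θ * ω r t ^ θ := by
    rw [← half]
    exact Real.rpow_le_rpow (H.ctl.nonneg hv0 hvt htT) h2 H.hθ.le
  have e3 : ω r v ^ θ ≤ ω r t ^ θ :=
    Real.rpow_le_rpow (H.ctl.nonneg hr (hru.trans huv) (hvt.trans htT))
      (H.ctl.mono' hr le_rfl (hru.trans huv) hvt htT) H.hθ.le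
  have hδ := H.hδ0
  have hδ1 := H.hδ1
  have hC := H.hC
  have a2 := H.lip v t hv0 hvt htT (y v) (φ v u (y u))
  have a3 := H.lip v t hv0 hvt htT (φ v u (y u)) (φ v u (φ u r (y r)))
  have a3' := H.lip u v hu0 huv (hvt.trans htT) (y u) (φ u r (y r))
  have a4 := H.lip v t hv0 hvt htT (φ v u (φ u r (y r))) (φ v r (y r))
  have a4' := H.comp r u v hr hru huv (hvt.trans htT) (y r)
  have a5 := H.comp r v t hr (hru.trans huv) hvt htT (y r)
  have hη : 0 ≤ η := (norm_nonneg _).trans k3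
  set W := ω r t ^ θ with hW
  have hW0 : 0 ≤ W := Real.rpow_nonneg hw0 _
  have key : y t - φ t r (y r) = (y t - φ t v (y v)) + (φ t v (y v) - φ t v (φ v u (y u)))
    + (φ t v (φ v u (y u)) - φ t v (φ v u (φ u r (y r))))
    + (φ t v (φ v u (φ u r (y r))) - φ t v (φ v r (y r)))
    + (φ t v (φ v r (y r)) - φ t r (y r)) := by abel
  have b1 : ‖y t - φ t v (y v)‖ ≤ K * ((1/2 : ℝ) ^ θ * W) := k2.trans (by gcongr)
  have b2 : ‖φ t v (y v) - φ t v (φ v u (y u))‖ ≤ 2 * η := by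
    refine a2.trans ?_
    gcongr
    linarith
  have b3 : ‖φ t v (φ v u (y u)) - φ t v (φ v u (φ u r (y r)))‖ ≤
      (1 + δ) * ((1 + δ) * (K * ((1/2 : ℝ) ^ θ * W))) := by
    refine a3.trans ?_
    gcongr
    refine a3'.trans ?_
    gcongr
    exact k1.trans (by gcongr)
  have b4 : ‖φ t v (φ v u (φ u r (y r))) - φ t v (φ v r (y r))‖ ≤ 2 * (C * W) := by
    refine a4.trans ?_
    gcongr
    · linarith
    · exact a4'.trans (by gcongr)
  rw [key]
  have n1 := norm_add_le ((y t - φ t v (y v)) + (φ t v (y v) - φ t v (φ v u (y u)))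
    + (φ t v (φ v u (y u)) - φ t v (φ v u (φ u r (y r))))
    + (φ t v (φ v u (φ u r (y r))) - φ t v (φ v r (y r)))) (φ t v (φ v r (y r)) - φ t r (y r))
  have n2 := norm_add_le ((y t - φ t v (y v)) + (φ t v (y v) - φ t v (φ v u (y u)))
    + (φ t v (φ v u (y u)) - φ t v (φ v u (φ u r (y r)))))
    (φ t v (φ v u (φ u r (y r))) - φ t v (φ v r (y r)))
  have n3 := norm_add₃_le (a := (y t - φ t v (y v))) (b := (φ t v (y v) - φ t v (φ v u (y u))))
    (c := (φ t v (φ v u (y u)) - φ t v (φ v u (φ u r (y r)))))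
  unfold kap
  linarith

/-- Euler scheme over a finite set of times. -/
def EulerOn (φ : ℝ → ℝ → V → V) (D : Finset ℝ) (y : ℝ → V) : Prop :=
  ∀ u ∈ D, ∀ v ∈ D, u < v → (∀ w ∈ D, u < w → v ≤ w) → y v = φ v u (y u)

theorem exists_euler (φ : ℝ → ℝ → V → V) (s : ℝ) (a : V) (D : Finset ℝ) :
    (∀ r ∈ D, s ≤ r) → s ∈ D → ∃ y : ℝ → V, y s = a ∧ EulerOn φ D y := by
  induction D using Finset.induction_on_max with
  | empty => intro _ h; simp at h
  | insert m D hm ih =>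
    intro hD hs
    by_cases hsD : s ∈ D
    · obtain ⟨y, hy, hE⟩ := ih (fun r hr => hD r (Finset.mem_insert_of_mem hr)) hsD
      obtain ⟨M, hM, hMmax⟩ := Finset.exists_max_image D id ⟨s, hsD⟩
      refine ⟨Function.update y m (φ m M (y M)), ?_, ?_⟩
      · rw [Function.update_of_ne (hm s hsD).ne, hy]
      · intro u hu v hv huv hc
        rcases Finset.mem_insert.mp hv with rfl | hv'
        · rcases Finset.mem_insert.mp hu with rfl | hu'
          · exact absurd huv (lt_irrefl _)
          · have : u = M := by
              by_contra hne
              have hlt : u < M := lt_of_le_of_ne (hMmax u hu') hne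
              exact absurd (hm M hM) (not_lt.mpr (hc M (Finset.mem_insert_of_mem hM) hlt))
            subst this
            rw [Function.update_self, Function.update_of_ne huv.ne]
        · rcases Finset.mem_insert.mp hu with rfl | hu'
          · exact absurd huv (not_lt.mpr (hm v hv').le)
          · rw [Function.update_of_ne (hm v hv').ne, Function.update_of_ne (hm u hu').ne]
            exact hE u hu' v hv' huv fun w hw => hc w (Finset.mem_insert_of_mem hw)
    · have hsm : s = m := by
        rcases Finset.mem_insert.mp hs with h | h
        · exact h
        · exact absurd h hsD
      refine ⟨fun _ => a, rfl, ?_⟩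
      have hDe : ∀ u ∈ insert m D, u = m := by
        intro u hu
        rcases Finset.mem_insert.mp hu with h | h
        · exact h
        · exact absurd (hm u h) (not_lt.mpr (hsm ▸ hD u hu))
      intro u hu v hv huv _
      rw [hDe u hu, hDe v hv] at huv
      exact absurd huv (lt_irrefl _)

theorem AlmostFlow.euler (H : AlmostFlow T ω θ δ C L B q φ) (D : Finset ℝ)
    (hD : ∀ r ∈ D, 0 ≤ r ∧ r ≤ T) (y : ℝ → V) (hy : EulerOn φ D y) :
    ∀ n : ℕ, ∀ r ∈ D, ∀ t ∈ D, r ≤ t → (D.filter (fun w => r ≤ w ∧ w ≤ t)).card ≤ n →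
      ‖y t - φ t r (y r)‖ ≤ L * ω r t ^ θ := by
  intro n
  induction n with
  | zero =>
    intro r hr t ht hrt hc
    have : r ∈ D.filter (fun w => r ≤ w ∧ w ≤ t) := by simp [hr, hrt]
    rw [Finset.card_eq_zero.mp (Nat.le_zero.mp hc)] at this
    simp at this
  | succ n ih =>
    intro r hr t ht hrt hc
    have hw0 : 0 ≤ ω r t := H.ctl.nonneg (hD r hr).1 hrt (hD t ht).2
    rcases hrt.eq_or_lt with h | hlt
    · subst h
      rw [H.diag, sub_self, norm_zero]
      exact mul_nonneg H.hL0 (Real.rpow_nonneg hw0 _)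
    have hrr : ω r r = 0 := H.ctl.diag (hD r hr).1 (hD r hr).2
    obtain ⟨u, hu, humax⟩ := Finset.exists_max_image
      (D.filter (fun u => r ≤ u ∧ u < t ∧ ω r u ≤ ω r t / 2)) id
      ⟨r, by simp [hr, hlt, hrr]; linarith⟩
    simp only [Finset.mem_filter, id] at hu humax
    obtain ⟨huD, hru, hut, hu2⟩ := hu
    obtain ⟨v, hv, hvmin⟩ := Finset.exists_min_image (D.filter (fun v => u < v)) id
      ⟨t, by simp [ht, hut]⟩
    simp only [Finset.mem_filter, id] at hv hvmin
    obtain ⟨hvD, huv⟩ := hv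
    have hvt : v ≤ t := hvmin t ⟨ht, hut⟩
    have hv2 : ω v t ≤ ω r t / 2 := by
      rcases hvt.eq_or_lt with h | h
      · subst h
        rw [H.ctl.diag (hD v hvD).1 (hD v hvD).2]; linarith
      · have : ω r t / 2 < ω r v := by
          by_contra hcon
          have := humax v ⟨hvD, hru.trans huv.le, h, not_lt.mp hcon⟩
          linarith
        have := H.ctl.superadd (hD r hr).1 (hru.trans huv.le) hvt (hD t ht).2
        linarith
    have c1 : (D.filter (fun w => r ≤ w ∧ w ≤ u)).card ≤ n := by
      refine Nat.lt_succ_iff.mp (lt_of_lt_of_le (Finset.card_lt_card ?_) hc)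
      rw [Finset.ssubset_iff_of_subset]
      · exact ⟨t, by simp [ht, hrt], by simp [hut]⟩
      · intro w; simp only [Finset.mem_filter]
        exact fun h => ⟨h.1, h.2.1, h.2.2.trans hut.le⟩
    have c2 : (D.filter (fun w => v ≤ w ∧ w ≤ t)).card ≤ n := by
      refine Nat.lt_succ_iff.mp (lt_of_lt_of_le (Finset.card_lt_card ?_) hc)
      rw [Finset.ssubset_iff_of_subset]
      · exact ⟨r, by simp [hr, hrt], by simp [hru.trans_lt huv]⟩
      · intro w; simp only [Finset.mem_filter]
        exact fun h => ⟨h.1, (hru.trans huv.le).trans h.2.1, h.2.2⟩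
    have := H.three (η := 0) H.hL0 (hD r hr).1 hru huv.le hvt (hD t ht).2 hu2 hv2
      (ih r hr u huD hru c1) (ih v hvD t ht hvt c2)
      (by rw [hy u huD v hvD huv (fun w hw h => hvmin w ⟨hw, h⟩), sub_self, norm_zero])
    rw [H.hL] at this
    linarith

/-- The solution sets. -/
def Sol (T : ℝ) (ω : ℝ → ℝ → ℝ) (θ L : ℝ) (φ : ℝ → ℝ → V → V) (s : ℝ) (a : V) :
    Set (ℝ → V) :=
  {y | (∀ r ∉ Ioc s T, y r = a) ∧ ∀ r t, s ≤ r → r ≤ t → t ≤ T →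
    ‖y t - φ t r (y r)‖ ≤ L * ω r t ^ θ}

theorem AlmostFlow.bdd (H : AlmostFlow T ω θ δ C L B q φ) {s r : ℝ} {a z : V}
    (hs : 0 ≤ s) (hsr : s ≤ r) (hrT : r ≤ T) (h : ‖z - φ r s a‖ ≤ L * ω s r ^ θ) :
    ‖z - a‖ ≤ L * ω 0 T ^ θ + B * ω 0 T ^ q := by
  have h1 := H.move s r hs hsr hrT a
  have hw := H.ctl.mono' le_rfl hs hsr hrT le_rfl
  have hw0 := H.ctl.nonneg hs hsr hrT
  have e1 : ω s r ^ θ ≤ ω 0 T ^ θ := Real.rpow_le_rpow hw0 hw H.hθ.le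
  have e2 : ω s r ^ q ≤ ω 0 T ^ q := Real.rpow_le_rpow hw0 hw H.hq.le
  have := H.hL0
  have := H.hB
  calc ‖z - a‖ = ‖(z - φ r s a) + (φ r s a - a)‖ := by congr 1; abel
    _ ≤ _ := norm_add_le _ _
    _ ≤ L * ω s r ^ θ + B * ω s r ^ q := add_le_add h h1
    _ ≤ _ := by gcongr

theorem AlmostFlow.contφ (H : AlmostFlow T ω θ δ C L B q φ) {s t : ℝ}
    (hs : 0 ≤ s) (hst : s ≤ t) (htT : t ≤ T) : Continuous (φ t s) := by
  have : LipschitzWith (Real.toNNReal (1 + δ)) (φ t s) := by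
    refine LipschitzWith.of_dist_le_mul fun a b => ?_
    rw [dist_eq_norm, dist_eq_norm, Real.coe_toNNReal _ (by linarith [H.hδ0])]
    exact H.lip s t hs hst htT a b
  exact this.continuous

theorem AlmostFlow.nonemptySol [ProperSpace V] (H : AlmostFlow T ω θ δ C L B q φ) {s : ℝ} {a : V}
    (hs : 0 ≤ s) (hsT : s ≤ T) : (Sol T ω θ L φ s a).Nonempty := by
  classical
  set R := L * ω 0 T ^ θ + B * ω 0 T ^ q with hR
  let K : Set (ℝ → V) := Set.pi univ (fun r => if r ∈ Ioc s T then Metric.closedBall a R else {a})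
  have hK : IsCompact K := by
    refine isCompact_univ_pi fun r => ?_
    split_ifs
    · exact isCompact_closedBall a R
    · exact isCompact_singleton
  let F : ℝ × ℝ → Set (ℝ → V) := fun i => {y | s ≤ i.1 → i.1 ≤ i.2 → i.2 ≤ T →
    ‖y i.2 - φ i.2 i.1 (y i.1)‖ ≤ L * ω i.1 i.2 ^ θ}
  obtain ⟨y, hyK, hyF⟩ := hK.inter_iInter_nonempty F (by
    rintro ⟨r, t⟩
    by_cases h : s ≤ r ∧ r ≤ t ∧ t ≤ T
    · have hc := H.contφ (hs.trans h.1) h.2.1 h.2.2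
      have : F (r, t) = {y | ‖y t - φ t r (y r)‖ ≤ L * ω r t ^ θ} := by
        ext y; simp [F, h.1, h.2.1, h.2.2]
      rw [this]
      exact isClosed_le (by fun_prop) continuous_const
    · have : F (r, t) = univ := by
        ext y
        simp only [F, mem_univ, iff_true]
        exact fun h1 h2 h3 => absurd ⟨h1, h2, h3⟩ h
      rw [this]
      exact isClosed_univ) (by
    intro P
    let D : Finset ℝ := insert s ((P.image Prod.fst ∪ P.image Prod.snd).filter
      (fun r => s ≤ r ∧ r ≤ T))
    have hD : ∀ r ∈ D, s ≤ r ∧ r ≤ T := by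
      intro r hr
      rcases Finset.mem_insert.mp hr with h | h
      · subst h; exact ⟨le_rfl, hsT⟩
      · exact (Finset.mem_filter.mp h).2
    have hsD : s ∈ D := Finset.mem_insert_self _ _
    obtain ⟨y, hys, hyE⟩ := exists_euler φ s a D (fun r hr => (hD r hr).1) hsD
    have hE := fun r hr t ht hrt => H.euler D
      (fun r hr => ⟨hs.trans (hD r hr).1, (hD r hr).2⟩) y hyE _ r hr t ht hrt le_rfl
    let y' : ℝ → V := fun r => if r ∈ D then y r else a
    refine ⟨y', ?_, ?_⟩
    · intro r _
      by_cases hrI : r ∈ Ioc s T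
      · simp only [if_pos hrI, Metric.mem_closedBall, dist_eq_norm]
        by_cases hrD : r ∈ D
        · simp only [y', if_pos hrD]
          refine H.bdd hs hrI.1.le hrI.2 ?_
          have := hE s hsD r hrD hrI.1.le
          rwa [hys] at this
        · simp only [y', if_neg hrD, sub_self, norm_zero]
          have := H.ctl.nonneg le_rfl H.hT.le le_rfl
          have := H.hL0
          have := H.hB
          positivity
      · simp only [if_neg hrI, mem_singleton_iff]
        by_cases hrD : r ∈ D
        · have : r = s := by
            by_contra hne
            exact hrI ⟨lt_of_le_of_ne (hD r hrD).1 (Ne.symm hne), (hD r hrD).2⟩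
          simp [y', this, hys]
        · simp [y', hrD]
    · simp only [mem_iInter]
      rintro ⟨r, t⟩ hP h1 h2 h3
      simp only at h1 h2 h3 ⊢
      have hrD : r ∈ D := by
        refine Finset.mem_insert_of_mem (Finset.mem_filter.mpr ⟨?_, h1, h2.trans h3⟩)
        exact Finset.mem_union_left _ (Finset.mem_image_of_mem Prod.fst hP)
      have htD : t ∈ D := by
        refine Finset.mem_insert_of_mem (Finset.mem_filter.mpr ⟨?_, h1.trans h2, h3⟩)
        exact Finset.mem_union_right _ (Finset.mem_image_of_mem Prod.snd hP)
      simp only [y', if_pos hrD, if_pos htD]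
      exact hE r hrD t htD h2)
  refine ⟨y, ?_, ?_⟩
  · intro r hr
    have := hyK r (mem_univ r)
    simpa only [if_neg hr, mem_singleton_iff] using this
  · intro r t h1 h2 h3
    exact mem_iInter.mp hyF (r, t) h1 h2 h3

theorem AlmostFlow.improve1 (H : AlmostFlow T ω θ δ C L B q φ) {s K : ℝ} {y : ℝ → V}
    (hs : 0 ≤ s) (hK : 0 ≤ K)
    (h : ∀ r t, s ≤ r → r ≤ t → t ≤ T → ‖y t - φ t r (y r)‖ ≤ K * ω r t ^ θ) :
    ∀ r t, s ≤ r → r ≤ t → t ≤ T →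
      ‖y t - φ t r (y r)‖ ≤ (kap θ δ * K + 3 * C) * ω r t ^ θ := by
  intro r t hsr hrt htT
  have hr0 := hs.trans hsr
  have hw0 : 0 ≤ ω r t := H.ctl.nonneg hr0 hrt htT
  refine le_of_forall_pos_le_add fun ε hε => ?_
  -- choose a small window
  have hcont : Filter.Tendsto (fun w : ℝ => 2 * (K * w ^ θ)) (nhds 0) (nhds 0) := by
    have := ((Real.continuousAt_rpow_const 0 θ (Or.inr H.hθ.le)).tendsto.const_mul K).const_mul 2
    simpa [Real.zero_rpow H.hθ.ne'] using this
  obtain ⟨ε', hε', hb⟩ := Metric.eventually_nhds_iff.mp (hcont.eventually (gt_mem_nhds hε))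
  obtain ⟨d, hd, hsm⟩ := H.ctl.small ε' hε'
  let A : Set ℝ := {u | r ≤ u ∧ u ≤ t ∧ ω r u ≤ ω r t / 2}
  have hrr : ω r r = 0 := H.ctl.diag hr0 (hrt.trans htT)
  have hrA : r ∈ A := ⟨le_rfl, hrt, by rw [hrr]; linarith⟩
  have hAb : BddAbove A := ⟨t, fun u hu => hu.2.1⟩
  obtain ⟨u, huA, hu⟩ := exists_lt_of_lt_csSup ⟨r, hrA⟩ (show sSup A - d / 2 < sSup A by linarith)
  have huS : u ≤ sSup A := le_csSup hAb huA
  let v := min t (sSup A + d / 2)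
  have huv : u ≤ v := le_min huA.2.1 (by linarith)
  have hvt : v ≤ t := min_le_left _ _
  have hvu : v - u ≤ d := by
    have : v ≤ sSup A + d / 2 := min_le_right _ _
    linarith
  have hv2 : ω v t ≤ ω r t / 2 := by
    rcases hvt.eq_or_lt with h | h
    · rw [h, H.ctl.diag (hr0.trans hrt) htT]; linarith
    · have hveq : v = sSup A + d / 2 := by
        rcases min_choice t (sSup A + d / 2) with h' | h'
        · exact absurd h' h.ne
        · exact h'
      have : ω r t / 2 < ω r v := by
        by_contra hcon
        have := le_csSup hAb (show v ∈ A from ⟨huA.1.trans huv, hvt, not_lt.mp hcon⟩)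
        linarith
      have := H.ctl.superadd hr0 (huA.1.trans huv) hvt htT
      linarith
  have hsu := hsr.trans huA.1
  have hwuv := hsm (hs.trans hsu) huv (hvt.trans htT) hvu
  have hwuv0 := H.ctl.nonneg (hs.trans hsu) huv (hvt.trans htT)
  have := H.three hK hr0 huA.1 huv hvt htT huA.2.2 hv2 (h r u hsr huA.1 (huA.2.1.trans htT))
    (h v t (hsu.trans huv) hvt htT) (h u v hsu huv (hvt.trans htT))
  have h2 := hb (y := ω u v) (by rw [Real.dist_eq, sub_zero, abs_of_nonneg hwuv0]; exact hwuv)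
  linarith

theorem AlmostFlow.improve (H : AlmostFlow T ω θ δ C L B q φ) {s K : ℝ} {y : ℝ → V}
    (hs : 0 ≤ s) (hK : 0 ≤ K)
    (h : ∀ r t, s ≤ r → r ≤ t → t ≤ T → ‖y t - φ t r (y r)‖ ≤ K * ω r t ^ θ) :
    ∀ r t, s ≤ r → r ≤ t → t ≤ T → ‖y t - φ t r (y r)‖ ≤ L * ω r t ^ θ := by
  have hκ0 : 0 ≤ kap θ δ := by unfold kap; positivity
  have hn : ∀ n : ℕ, ∀ r t, s ≤ r → r ≤ t → t ≤ T →
      ‖y t - φ t r (y r)‖ ≤ (L + kap θ δ ^ n * K) * ω r t ^ θ := by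
    intro n
    induction n with
    | zero =>
      intro r t h1 h2 h3
      refine (h r t h1 h2 h3).trans ?_
      have := H.hL0
      have := H.ctl.nonneg (hs.trans h1) h2 h3
      gcongr
      simpa
    | succ n ih =>
      intro r t h1 h2 h3
      have := H.improve1 hs (by have := H.hL0; positivity) ih r t h1 h2 h3
      convert this using 2
      have := H.hL
      rw [pow_succ]
      linear_combination -this
  intro r t h1 h2 h3
  have hlim : Filter.Tendsto (fun n : ℕ => (L + kap θ δ ^ n * K) * ω r t ^ θ) Filter.atTop
      (nhds ((L + 0 * K) * ω r t ^ θ)) :=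
    (((tendsto_pow_atTop_nhds_zero_of_lt_one hκ0 H.hκ).mul_const K).const_add L).mul_const _
  rw [zero_mul, add_zero] at hlim
  exact ge_of_tendsto' hlim fun n => hn n r t h1 h2 h3

theorem AlmostFlow.contSol (H : AlmostFlow T ω θ δ C L B q φ) {s : ℝ} {a : V} {y : ℝ → V}
    (hs : 0 ≤ s) (hy : y ∈ Sol T ω θ L φ s a) : ContinuousOn y (Icc s T) := by
  have hmod : ∀ ε > 0, ∃ d > 0, ∀ r t, s ≤ r → r ≤ t → t ≤ T → t - r ≤ d → ‖y t - y r‖ < ε := by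
    intro ε hε
    have hcont : Filter.Tendsto (fun w : ℝ => L * w ^ θ + B * w ^ q) (nhds 0) (nhds 0) := by
      have := ((Real.continuousAt_rpow_const 0 θ (Or.inr H.hθ.le)).tendsto.const_mul L).add
        ((Real.continuousAt_rpow_const 0 q (Or.inr H.hq.le)).tendsto.const_mul B)
      simpa [Real.zero_rpow H.hθ.ne', Real.zero_rpow H.hq.ne'] using this
    obtain ⟨ε', hε', hb⟩ := Metric.eventually_nhds_iff.mp (hcont.eventually (gt_mem_nhds hε))
    obtain ⟨d, hd, hsm⟩ := H.ctl.small ε' hε'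
    refine ⟨d, hd, fun r t h1 h2 h3 h4 => ?_⟩
    have hw := hsm (hs.trans h1) h2 h3 h4
    have hw0 := H.ctl.nonneg (hs.trans h1) h2 h3
    have h5 := hb (y := ω r t) (by rw [Real.dist_eq, sub_zero, abs_of_nonneg hw0]; exact hw)
    have h6 := H.move r t (hs.trans h1) h2 h3 (y r)
    have h7 := hy.2 r t h1 h2 h3
    calc ‖y t - y r‖ = ‖(y t - φ t r (y r)) + (φ t r (y r) - y r)‖ := by congr 1; abel
      _ ≤ _ := norm_add_le _ _
      _ < ε := by linarith
  rw [Metric.continuousOn_iff]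
  intro t ht ε hε
  obtain ⟨d, hd, h⟩ := hmod ε hε
  refine ⟨d, hd, fun r hr hrt => ?_⟩
  rw [Real.dist_eq, abs_lt] at hrt
  rcases le_total r t with hle | hle
  · rw [dist_comm, dist_eq_norm]
    exact h r t hr.1 hle ht.2 (by linarith)
  · rw [dist_eq_norm]
    exact h t r ht.1 hle hr.2 (by linarith)

theorem AlmostFlow.closedSol (H : AlmostFlow T ω θ δ C L B q φ) {s : ℝ} (hs : 0 ≤ s) :
    IsClosed {z : V × (ℝ → V) | z.2 ∈ Sol T ω θ L φ s z.1} := by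
  have : {z : V × (ℝ → V) | z.2 ∈ Sol T ω θ L φ s z.1} =
      (⋂ r, ⋂ (_ : r ∉ Ioc s T), {z : V × (ℝ → V) | z.2 r = z.1}) ∩
      (⋂ r, ⋂ t, ⋂ (_ : s ≤ r), ⋂ (_ : r ≤ t), ⋂ (_ : t ≤ T),
        {z : V × (ℝ → V) | ‖z.2 t - φ t r (z.2 r)‖ ≤ L * ω r t ^ θ}) := by
    ext z
    simp only [Sol, mem_inter_iff, mem_iInter, mem_ofPred_eq]
  rw [this]
  refine IsClosed.inter ?_ ?_
  · exact isClosed_iInter fun r => isClosed_iInter fun _ => isClosed_eq (by fun_prop) (by fun_prop)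
  · refine isClosed_iInter fun r => isClosed_iInter fun t => isClosed_iInter fun h1 =>
      isClosed_iInter fun h2 => isClosed_iInter fun h3 => ?_
    have hc := H.contφ (hs.trans h1) h2 h3
    exact isClosed_le (by fun_prop) continuous_const

theorem AlmostFlow.resSol (H : AlmostFlow T ω θ δ C L B q φ) {s t : ℝ} {a : V} {y : ℝ → V}
    (hst : s ≤ t) (hy : y ∈ Sol T ω θ L φ s a) :
    splice T t (fun _ => y t) y ∈ Sol T ω θ L φ t (y t) := by
  have hval : ∀ r, t ≤ r → r ≤ T → splice T t (fun _ => y t) y r = y r := by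
    intro r h1 h2
    by_cases h : r ∈ Ioc t T
    · simp [splice, h]
    · have : r = t := by
        by_contra hne
        exact h ⟨lt_of_le_of_ne h1 (Ne.symm hne), h2⟩
      simp [splice, this]
  refine ⟨fun r hr => by simp [splice, hr], fun r u h1 h2 h3 => ?_⟩
  rw [hval r h1 (h2.trans h3), hval u (h1.trans h2) h3]
  exact hy.2 r u (hst.trans h1) h2 h3

theorem AlmostFlow.splSol (H : AlmostFlow T ω θ δ C L B q φ) {s t : ℝ} {a : V} {y z : ℝ → V}
    (hs : 0 ≤ s) (hst : s ≤ t) (htT : t ≤ T) (hy : y ∈ Sol T ω θ L φ s a)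
    (hz : z ∈ Sol T ω θ L φ t (y t)) :
    splice T t y z ∈ Sol T ω θ L φ s a := by
  have hzt : z t = y t := hz.1 t (by simp)
  have v1 : ∀ r, r ≤ t → splice T t y z r = y r := by
    intro r h1
    simp [splice, not_lt.mpr h1]
  have v2 : ∀ r, t ≤ r → r ≤ T → splice T t y z r = z r := by
    intro r h1 h2
    rcases h1.eq_or_lt with h | h
    · rw [← h, v1 t le_rfl, hzt]
    · simp [splice, h, h2]
  have hL0 := H.hL0
  have hC := H.hC
  refine ⟨fun r hr => ?_, H.improve (K := 3 * L + C) hs (by positivity) fun r u h1 h2 h3 => ?_⟩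
  · have hr' : r ∉ Ioc t T := fun h => hr ⟨hst.trans_lt h.1, h.2⟩
    simp only [splice, if_neg hr']
    exact hy.1 r hr
  · have hw0 := H.ctl.nonneg (hs.trans h1) h2 h3
    set W := ω r u ^ θ with hW
    have hW0 : 0 ≤ W := Real.rpow_nonneg hw0 _
    have hmon : L * W ≤ (3 * L + C) * W := by gcongr; linarith
    rcases le_total u t with hut | htu
    · rw [v1 u hut, v1 r (h2.trans hut)]
      exact (hy.2 r u h1 h2 h3).trans hmon
    rcases le_total t r with htr | hrt
    · rw [v2 u htu h3, v2 r htr (h2.trans h3)]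
      exact (hz.2 r u htr h2 h3).trans hmon
    rw [v2 u htu h3, v1 r hrt]
    have hr0 := hs.trans h1
    have ht0 := hr0.trans hrt
    have e1 := hz.2 t u le_rfl htu h3
    have e2 := hy.2 r t h1 hrt htT
    have e3 := H.lip t u ht0 htu h3 (y t) (φ t r (y r))
    have e4 := H.comp r t u hr0 hrt htu h3 (y r)
    rw [hzt] at e1
    have w1 : ω t u ^ θ ≤ W := Real.rpow_le_rpow (H.ctl.nonneg ht0 htu h3)
      (H.ctl.mono' hr0 hrt htu le_rfl h3) H.hθ.le
    have w2 : ω r t ^ θ ≤ W := Real.rpow_le_rpow (H.ctl.nonneg hr0 hrt htT)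
      (H.ctl.mono' hr0 le_rfl hrt htu h3) H.hθ.le
    have f1 : ‖z u - φ u t (y t)‖ ≤ L * W := e1.trans (by gcongr)
    have f2 : ‖φ u t (y t) - φ u t (φ t r (y r))‖ ≤ 2 * (L * W) := by
      refine e3.trans ?_
      gcongr
      · linarith [H.hδ1]
      · exact e2.trans (by gcongr)
    calc ‖z u - φ u r (y r)‖ = ‖(z u - φ u t (y t)) + (φ u t (y t) - φ u t (φ t r (y r)))
          + (φ u t (φ t r (y r)) - φ u r (y r))‖ := by congr 1; abel
      _ ≤ _ := norm_add₃_le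
      _ ≤ _ := by linarith

theorem AlmostFlow.main [NormedSpace ℝ V] [FiniteDimensional ℝ V] [MeasurableSpace V]
    [BorelSpace V] (H : AlmostFlow T ω θ δ C L B q φ) :
    ∃ Y : ℝ → V → ℝ → V,
      (∀ s, 0 ≤ s → s ≤ T → ∀ a, Y s a ∈ Sol T ω θ L φ s a) ∧
      (∀ r s t, 0 ≤ r → r ≤ s → s ≤ t → t ≤ T → ∀ a, Y s (Y r a s) t = Y r a t) ∧
      (∀ s t, 0 ≤ s → s ≤ t → t ≤ T → Measurable (fun a => Y s a t)) := by
  have : ProperSpace V := FiniteDimensional.proper ℝ V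
  refine selection T (Sol T ω θ L φ) (L * ω 0 T ^ θ + B * ω 0 T ^ q)
    (fun s a hs hsT => H.nonemptySol hs hsT) (fun s hs _ => H.closedSol hs) ?_
    (fun s _ _ a y hy => hy.1)
    (fun s t _ hst _ a y hy => H.resSol hst hy)
    (fun s t hs hst htT a y hy z hz => H.splSol hs hst htT hy hz)
    (fun s hs _ a y hy => H.contSol hs hy)
  intro s hs hsT a y hy r
  by_cases hr : r ∈ Ioc s T
  · refine H.bdd hs hr.1.le hr.2 ?_
    have := hy.2 s r le_rfl hr.1.le hr.2
    rwa [hy.1 s (by simp)] at this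
  · rw [hy.1 r hr, sub_self, norm_zero]
    have := H.ctl.nonneg le_rfl H.hT.le le_rfl
    have := H.hL0
    have := H.hB
    positivity

end AF

/-- Corollary: a measurable flow for Young differential equations.
Let `V` be finite-dimensional, `x` a path of finite `p`-variation (`1 ≤ p < 2`)
controlled by `ω`, and `f ∈ C¹_b(V, L(U,V))`. With `φ_{t,s}(a) = a + f(a)x_{s,t}`,
for `T` small enough there exists a family `ψ = (ψ_{t,s})_{0≤s≤t≤T}` with the flow
property, each `ψ_{t,s}` Borel measurable, lying in the same galaxy as `φ`:
`‖ψ_{t,s}(a) − φ_{t,s}(a)‖ ≤ C(1+‖f(a)‖)ω_{s,t}^{2/p}`. In particular each path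
`t ↦ ψ_{t,0}(a)` is a solution in the sense of Davie of `y_t = a + ∫₀ᵗ f(y_s)dx_s`. -/
theorem statement19 {U V : Type*} [NormedAddCommGroup U] [NormedSpace ℝ U]
    [CompleteSpace U] [NormedAddCommGroup V] [NormedSpace ℝ V]
    [FiniteDimensional ℝ V] [MeasurableSpace V] [BorelSpace V]
    (ω : ℝ → ℝ → ℝ) (hω : ∀ S > (0:ℝ), IsControl S ω)
    (p : ℝ) (hp1 : 1 ≤ p) (hp2 : p < 2)
    (x : ℝ → U) (xp : ℝ) (hxp : 0 ≤ xp)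
    (hx : ∀ ⦃s t : ℝ⦄, 0 ≤ s → s ≤ t → ‖x t - x s‖ ≤ xp * ω s t ^ (1 / p))
    (f : V → U →L[ℝ] V) (hf : ContDiff ℝ 1 f)
    (Mf : ℝ) (hfb : ∀ a : V, ‖f a‖ ≤ Mf)
    (Mdf : ℝ) (hdfb : ∀ a : V, ‖fderiv ℝ f a‖ ≤ Mdf) :
    ∃ T > (0:ℝ), ∃ ψ : ℝ → ℝ → V → V,
      (∀ ⦃t : ℝ⦄, 0 ≤ t → t ≤ T → ∀ a : V, ψ t t a = a) ∧
      (∀ ⦃r s t : ℝ⦄, 0 ≤ r → r ≤ s → s ≤ t → t ≤ T → ∀ a : V,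
        ψ t s (ψ s r a) = ψ t r a) ∧
      (∀ ⦃s t : ℝ⦄, 0 ≤ s → s ≤ t → t ≤ T → Measurable (ψ t s)) ∧
      (∃ C : ℝ, ∀ ⦃s t : ℝ⦄, 0 ≤ s → s ≤ t → t ≤ T → ∀ a : V,
        ‖ψ t s a - (a + f a (x t - x s))‖ ≤
          C * (1 + ‖f a‖) * ω s t ^ (2 / p)) ∧
      (∀ a : V, ContinuousOn (fun t : ℝ => ψ t 0 a) (Set.Icc 0 T)) ∧
      ∃ K : ℝ, ∀ a : V, ∀ ⦃s t : ℝ⦄, 0 ≤ s → s ≤ t → t ≤ T →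
        ‖ψ t 0 a - (ψ s 0 a + f (ψ s 0 a) (x t - x s))‖ ≤
          K * (1 + ‖f a‖) * ω s t ^ (2 / p) := by
  have hp0 : 0 < p := by linarith
  set θ : ℝ := 2 / p with hθdef
  have hθ1 : 1 < θ := by rw [hθdef, lt_div_iff₀ hp0]; linarith
  have hq : 0 < 1 / p := by positivity
  have hMf : 0 ≤ Mf := (norm_nonneg _).trans (hfb 0)
  have hMdf : 0 ≤ Mdf := (norm_nonneg (fderiv ℝ f 0)).trans (hdfb 0)
  -- choice of `δ`
  have hlim : Filter.Tendsto (fun d : ℝ => kap θ d) (nhds 0) (nhds (kap θ 0)) := by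
    have : Continuous (fun d : ℝ => kap θ d) := by unfold kap; fun_prop
    exact this.tendsto 0
  have hk0 : kap θ 0 < 1 := by
    have : (1 / 2 : ℝ) ^ θ < (1 / 2 : ℝ) ^ (1 : ℝ) :=
      Real.rpow_lt_rpow_of_exponent_gt (by norm_num) (by norm_num) hθ1
    rw [Real.rpow_one] at this
    unfold kap
    linarith
  obtain ⟨e, he, hke⟩ := Metric.eventually_nhds_iff.mp (hlim.eventually (gt_mem_nhds hk0))
  -- choice of `T`
  have hlim2 : Filter.Tendsto (fun w : ℝ => Mdf * (xp * w ^ (1 / p))) (nhds 0) (nhds 0) := by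
    have := ((Real.continuousAt_rpow_const 0 (1 / p) (Or.inr hq.le)).tendsto.const_mul
      xp).const_mul Mdf
    simpa [Real.zero_rpow hq.ne', hp0.ne'] using this
  obtain ⟨e', he', hw⟩ := Metric.eventually_nhds_iff.mp
    (hlim2.eventually (gt_mem_nhds (lt_min he one_pos)))
  obtain ⟨h, hh, hsm⟩ := (hω 1 one_pos).small e' he'
  let T := min h 1
  have hT : 0 < T := lt_min hh one_pos
  have hctl := hω T hT
  let δ := Mdf * (xp * ω 0 T ^ (1 / p))
  have hw0 : 0 ≤ ω 0 T := hctl.nonneg le_rfl hT.le le_rfl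
  have hδ0 : 0 ≤ δ := by positivity
  have hδlt : δ < min e 1 := by
    apply hw
    rw [Real.dist_eq, sub_zero, abs_of_nonneg hw0]
    exact hsm le_rfl hT.le (min_le_right _ _) (by rw [sub_zero]; exact min_le_left _ _)
  have hκ : kap θ δ < 1 := by
    apply hke
    rw [Real.dist_eq, sub_zero, abs_of_nonneg hδ0]
    exact hδlt.trans_le (min_le_left _ _)
  have hlip : ∀ a b, ‖f a - f b‖ ≤ Mdf * ‖a - b‖ := fun a b =>
    Convex.norm_image_sub_le_of_norm_fderiv_le (𝕜 := ℝ)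
      (fun z _ => (hf.differentiable (by norm_num)).differentiableAt) (fun z _ => hdfb z)
      convex_univ (mem_univ b) (mem_univ a)
  let C := Mdf * (Mf * xp) * xp
  have hC : 0 ≤ C := by positivity
  let L := 3 * C / (1 - kap θ δ)
  have h1κ : 0 < 1 - kap θ δ := by linarith
  have hL0 : 0 ≤ L := by positivity
  let φ : ℝ → ℝ → V → V := fun t s a => a + f a (x t - x s)
  have hmove : ∀ s t, 0 ≤ s → s ≤ t → t ≤ T → ∀ a,
      ‖f a (x t - x s)‖ ≤ Mf * xp * ω s t ^ (1 / p) := by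
    intro s t hs hst htT a
    calc ‖f a (x t - x s)‖ ≤ ‖f a‖ * ‖x t - x s‖ := (f a).le_opNorm _
      _ ≤ Mf * (xp * ω s t ^ (1 / p)) := by
        gcongr
        · exact hfb a
        · exact hx hs hst
      _ = _ := by ring
  have H : AlmostFlow T ω θ δ C L (Mf * xp) (1 / p) φ :=
    { hT := hT
      ctl := hctl
      hθ := by linarith
      hδ0 := hδ0
      hδ1 := (hδlt.trans_le (min_le_right _ _)).le
      hC := hC
      hL0 := hL0
      hB := by positivity
      hq := hq
      hκ := hκ
      hL := by
        have : L * (1 - kap θ δ) = 3 * C := div_mul_cancel₀ _ h1κ.ne'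
        linarith
      diag := fun t a => by simp [φ]
      lip := by
        intro s t hs hst htT a b
        have e1 : φ t s a - φ t s b = (a - b) + (f a - f b) (x t - x s) := by
          simp only [φ, ContinuousLinearMap.sub_apply]; abel
        have e2 : ‖(f a - f b) (x t - x s)‖ ≤ (Mdf * ‖a - b‖) * (xp * ω 0 T ^ (1 / p)) := by
          refine ((f a - f b).le_opNorm _).trans ?_
          gcongr
          · exact hlip a b
          · refine (hx hs hst).trans ?_
            gcongr
            · exact hctl.nonneg hs hst htT
            · exact hctl.mono' le_rfl hs hst htT le_rfl
        rw [e1]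
        refine (norm_add_le _ _).trans ?_
        calc ‖a - b‖ + ‖(f a - f b) (x t - x s)‖
            ≤ ‖a - b‖ + (Mdf * ‖a - b‖) * (xp * ω 0 T ^ (1 / p)) := by gcongr
          _ = _ := by simp only [δ]; ring
      comp := by
        intro s u t hs hsu hut htT a
        have e1 : φ t u (φ u s a) - φ t s a =
            (f (a + f a (x u - x s)) - f a) (x t - x u) := by
          have : x t - x s = (x t - x u) + (x u - x s) := by abel
          simp only [φ, ContinuousLinearMap.sub_apply]
          rw [this, map_add]; abel
        have wst := hctl.nonneg hs (hsu.trans hut) htT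
        have w1 : ω s u ^ (1 / p) ≤ ω s t ^ (1 / p) := Real.rpow_le_rpow
          (hctl.nonneg hs hsu (hut.trans htT)) (hctl.mono' hs le_rfl hsu hut htT) hq.le
        have w2 : ω u t ^ (1 / p) ≤ ω s t ^ (1 / p) := Real.rpow_le_rpow
          (hctl.nonneg (hs.trans hsu) hut htT) (hctl.mono' hs hsu hut le_rfl htT) hq.le
        have w3 : ω s t ^ θ = ω s t ^ (1 / p) * ω s t ^ (1 / p) := by
          rw [← Real.rpow_add_of_nonneg wst hq.le hq.le]
          congr 1; rw [hθdef]; ring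
        rw [e1]
        refine (ContinuousLinearMap.le_opNorm _ _).trans ?_
        have e2 : ‖f (a + f a (x u - x s)) - f a‖ ≤ Mdf * (Mf * xp * ω s t ^ (1 / p)) := by
          refine (hlip _ _).trans ?_
          gcongr
          rw [add_sub_cancel_left]
          refine (hmove s u hs hsu (hut.trans htT) a).trans ?_
          gcongr
        have e3 : ‖x t - x u‖ ≤ xp * ω s t ^ (1 / p) :=
          (hx (hs.trans hsu) hut).trans (by gcongr)
        calc _ ≤ (Mdf * (Mf * xp * ω s t ^ (1 / p))) * (xp * ω s t ^ (1 / p)) := by gcongr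
          _ = _ := by rw [w3]; simp only [C]; ring
      move := by
        intro s t hs hst htT a
        simp only [φ, add_sub_cancel_left]
        exact hmove s t hs hst htT a }
  obtain ⟨Y, hY1, hY2, hY3⟩ := H.main
  have hbound : ∀ ⦃s t : ℝ⦄, 0 ≤ s → s ≤ t → t ≤ T → ∀ a : V,
      L * ω s t ^ θ ≤ L * (1 + ‖f a‖) * ω s t ^ θ := by
    intro s t hs hst htT a
    have := hctl.nonneg hs hst htT
    gcongr
    have := norm_nonneg (f a)
    nlinarith
  have hself : ∀ s, 0 ≤ s → s ≤ T → ∀ a, Y s a s = a := fun s hs hsT a =>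
    (hY1 s hs hsT a).1 s (by simp)
  refine ⟨T, hT, fun t s a => Y s a t, ?_, ?_, ?_, ⟨L, ?_⟩, ?_, ⟨L, ?_⟩⟩
  · intro t ht htT a
    exact hself t ht htT a
  · intro r s t hr hrs hst htT a
    exact hY2 r s t hr hrs hst htT a
  · intro s t hs hst htT
    exact hY3 s t hs hst htT
  · intro s t hs hst htT a
    have h1 := (hY1 s hs (hst.trans htT) a).2 s t le_rfl hst htT
    rw [hself s hs (hst.trans htT) a] at h1
    exact h1.trans (hbound hs hst htT a)
  · intro a
    exact H.contSol le_rfl (hY1 0 le_rfl hT.le a)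
  · intro a s t hs hst htT
    exact ((hY1 0 le_rfl hT.le a).2 s t hs hst htT).trans (hbound hs hst htT a)

end
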